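/- Let μ ∈ {0,1}, m ≥ 1, n = 2m + μ, let k ≥ 0 be an integer and s > 0. For an integer j, define A_j = ∫_{ℝ^n} 1[ #{i : |x_i| < s} = j ] · ∏_{i=1}^{n} e^{−x_i²/2} · ∏_{1≤i<l≤n} |x_l − x_i| dx and Z₁ = ∫_{ℝ^n} ∏_{i=1}^{n} e^{−x_i²/2} · ∏_{1≤i<l≤n} |x_l − x_i| dx, with the convention A_j = 0 for j < 0. Further define B_k = ∫_{(0,∞)^m} 1[ #{i : y_i < s²} = k ] · ∏_{i=1}^{m} y_i^{μ−1/2} e^{−y_i} · ∏_{1≤i<l≤m} (y_l − y_i)² dy and Z₂ = ∫_{(0,∞)^m} ∏_{i=1}^{m} y_i^{μ−1/2} e^{−y_i} · ∏_{1≤i<l≤m} (y_l − y_i)² dy. Then all these integrals are finite, Z₁ > 0, Z₂ > 0, and (A_{2k+μ−1} + A_{2k+μ}) / Z₁ = B_k / Z₂. -/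

import Mathlib

open MeasureTheory

/-- The integrand of the GOE gap-counting integral `A_j`: the indicator that exactly `j`
of the `|x_i|` are `< s`, times `∏ e^{-x_i²/2} ∏_{i<l} |x_l - x_i|`. -/
noncomputable def goeGapIntegrand (n : ℕ) (s : ℝ) (j : ℤ) (x : Fin n → ℝ) : ℝ :=
  if ((Finset.univ.filter fun i => |x i| < s).card : ℤ) = j then
    (∏ i, Real.exp (-(x i) ^ 2 / 2)) * ∏ k, ∏ l ∈ Finset.Iio k, |x k - x l|
  else 0

/-- The integrand of the GOE normalization `Z₁`. -/
noncomputable def goeTotalIntegrand (n : ℕ) (x : Fin n → ℝ) : ℝ :=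
  (∏ i, Real.exp (-(x i) ^ 2 / 2)) * ∏ k, ∏ l ∈ Finset.Iio k, |x k - x l|

/-- The integrand of the LUE (parameter `μ - 1/2`) gap-counting integral `B_k`. -/
noncomputable def lueGapIntegrand (m μ : ℕ) (c : ℝ) (k : ℕ) (y : Fin m → ℝ) : ℝ :=
  if (Finset.univ.filter fun i => y i < c).card = k then
    (∏ i, (y i) ^ ((μ : ℝ) - 1 / 2) * Real.exp (-(y i))) *
      ∏ i, ∏ l ∈ Finset.Iio i, (y i - y l) ^ 2
  else 0

/-- The integrand of the LUE normalization `Z₂`. -/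
noncomputable def lueTotalIntegrand (m μ : ℕ) (y : Fin m → ℝ) : ℝ :=
  (∏ i, (y i) ^ ((μ : ℝ) - 1 / 2) * Real.exp (-(y i))) *
    ∏ i, ∏ l ∈ Finset.Iio i, (y i - y l) ^ 2

/-! ### Symmetrisation lemmas -/

lemma ae_injective (n : ℕ) : ∀ᵐ x : Fin n → ℝ, Function.Injective x := by
  have h : ∀ i j : Fin n, i ≠ j → ∀ᵐ x : Fin n → ℝ, x i ≠ x j := by
    intro i j hij
    have := Measure.addHaar_submodule (volume : Measure (Fin n → ℝ))
      (LinearMap.ker ((LinearMap.proj i : (Fin n → ℝ) →ₗ[ℝ] ℝ) - LinearMap.proj j)) (by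
        intro htop
        rw [LinearMap.ker_eq_top] at htop
        have h1 := congrArg (fun f => f (Pi.single i 1)) htop
        simp [hij.symm] at h1)
    rw [ae_iff]
    convert this using 2
    ext x
    simp [sub_eq_zero]
  have h2 : ∀ᵐ x : Fin n → ℝ, ∀ i j : Fin n, i ≠ j → x i ≠ x j := by
    rw [ae_all_iff]; intro i
    rw [ae_all_iff]; intro j
    by_cases hij : i = j
    · simp [hij]
    · filter_upwards [h i j hij] with x hx _ using hx
  filter_upwards [h2] with x hx i j hij
  by_contra hne
  exact hx i j hne hij

lemma ae_ne_zero (n : ℕ) : ∀ᵐ x : Fin n → ℝ, ∀ i, x i ≠ 0 := by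
  rw [ae_all_iff]
  intro i
  have := Measure.addHaar_submodule (volume : Measure (Fin n → ℝ))
      (LinearMap.ker ((LinearMap.proj i : (Fin n → ℝ) →ₗ[ℝ] ℝ))) (by
        intro htop
        rw [LinearMap.ker_eq_top] at htop
        have h1 := congrArg (fun f => f (Pi.single i 1)) htop
        simp at h1)
  rw [ae_iff]
  convert this using 2
  ext x
  simp

lemma measurableSet_strictMono (n : ℕ) : MeasurableSet {x : Fin n → ℝ | StrictMono x} := by
  have : {x : Fin n → ℝ | StrictMono x} = ⋂ i, ⋂ j, {x | i < j → x i < x j} := by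
    ext x; simp [StrictMono]
  rw [this]
  refine MeasurableSet.iInter fun i => MeasurableSet.iInter fun j => ?_
  by_cases h : i < j
  · simp only [h, forall_const]
    exact measurableSet_lt (measurable_pi_apply i) (measurable_pi_apply j)
  · simp [h]

lemma measurableSet_posOrthant (n : ℕ) : MeasurableSet {x : Fin n → ℝ | ∀ i, 0 < x i} := by
  have : {x : Fin n → ℝ | ∀ i, 0 < x i} = ⋂ i, {x | 0 < x i} := by
    ext x; simp
  rw [this]
  exact MeasurableSet.iInter fun i => measurableSet_lt measurable_const (measurable_pi_apply i)

lemma perm_eq_piCongrLeft (n : ℕ) (σ : Equiv.Perm (Fin n)) :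
    (fun x : Fin n → ℝ => x ∘ σ) = (MeasurableEquiv.piCongrLeft (fun _ : Fin n => ℝ) σ.symm) := by
  ext x i
  have := MeasurableEquiv.piCongrLeft_apply_apply (β := fun _ : Fin n => ℝ) σ.symm x (σ i)
  simp at this
  simp [this]

lemma perm_measurePreserving (n : ℕ) (σ : Equiv.Perm (Fin n)) :
    MeasurePreserving (fun x : Fin n → ℝ => x ∘ σ) := by
  rw [perm_eq_piCongrLeft]
  exact volume_measurePreserving_piCongrLeft (fun _ : Fin n => ℝ) σ.symm

lemma integral_perm_symm (n : ℕ) (F : (Fin n → ℝ) → ℝ) (hF : Integrable F)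
    (hs : ∀ (σ : Equiv.Perm (Fin n)) x, F (x ∘ σ) = F x) :
    ∫ x, F x = (n.factorial : ℝ) * ∫ x in {x : Fin n → ℝ | StrictMono x}, F x := by
  classical
  set S := {x : Fin n → ℝ | StrictMono x} with hS
  have hSm : MeasurableSet S := measurableSet_strictMono n
  have h1 : ∀ σ : Equiv.Perm (Fin n), ∫ x, S.indicator F (x ∘ σ) = ∫ x, S.indicator F x := by
    intro σ
    have hp := perm_measurePreserving n σ
    have he : MeasurableEmbedding (fun x : Fin n → ℝ => x ∘ σ) := by
      rw [perm_eq_piCongrLeft]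
      exact MeasurableEquiv.measurableEmbedding _
    exact hp.integral_comp he _
  have h2 : ∀ᵐ x : Fin n → ℝ, F x = ∑ σ : Equiv.Perm (Fin n), S.indicator F (x ∘ σ) := by
    filter_upwards [ae_injective n] with x hx
    rw [Finset.sum_eq_single (Tuple.sort x)]
    · have : x ∘ Tuple.sort x ∈ S :=
        (Tuple.monotone_sort x).strictMono_of_injective (hx.comp (Equiv.injective _))
      rw [Set.indicator_of_mem this, hs]
    · intro σ _ hσ
      apply Set.indicator_of_notMem
      intro hmem
      apply hσ
      have := Tuple.unique_monotone (StrictMono.monotone hmem) (Tuple.monotone_sort x)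
      ext i
      have := congrFun this i
      simp at this
      rw [hx this]
    · simp
  have h3 : ∀ σ : Equiv.Perm (Fin n), Integrable (fun x => S.indicator F (x ∘ σ)) := by
    intro σ
    exact (perm_measurePreserving n σ).integrable_comp_of_integrable (hF.indicator hSm)
  rw [integral_congr_ae h2, integral_finsetSum _ (fun σ _ => h3 σ)]
  simp only [h1, integral_indicator hSm]
  simp [Fintype.card_perm]

/-- multiply coordinates by signs -/
noncomputable def sgnMul {n : ℕ} (ε : Fin n → ℤˣ) (x : Fin n → ℝ) : Fin n → ℝ :=
  fun i => ((ε i : ℤ) : ℝ) * x i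

lemma sgnMul_measurePreserving {n : ℕ} (ε : Fin n → ℤˣ) :
    MeasurePreserving (sgnMul ε) := by
  refine volume_preserving_pi (f := fun i (t : ℝ) => ((ε i : ℤ) : ℝ) * t) ?_
  intro i
  rcases Int.units_eq_one_or (ε i) with h | h
  · simpa [h] using! MeasurePreserving.id (volume : Measure ℝ)
  · simpa [h] using Measure.measurePreserving_neg (volume : Measure ℝ)

lemma sgnMul_sgnMul {n : ℕ} (ε : Fin n → ℤˣ) (x : Fin n → ℝ) : sgnMul ε (sgnMul ε x) = x := by
  ext i
  rcases Int.units_eq_one_or (ε i) with h | h <;> simp [sgnMul, h]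

lemma sgnMul_embedding {n : ℕ} (ε : Fin n → ℤˣ) : MeasurableEmbedding (sgnMul ε) := by
  let e : (Fin n → ℝ) ≃ᵐ (Fin n → ℝ) :=
    { toFun := sgnMul ε
      invFun := sgnMul ε
      left_inv := sgnMul_sgnMul ε
      right_inv := sgnMul_sgnMul ε
      measurable_toFun := (sgnMul_measurePreserving ε).measurable
      measurable_invFun := (sgnMul_measurePreserving ε).measurable }
  exact e.measurableEmbedding

lemma integral_sign_symm (n : ℕ) (F : (Fin n → ℝ) → ℝ) (hF : Integrable F) :
    ∫ x, F x = ∫ x in {x : Fin n → ℝ | ∀ i, 0 < x i}, ∑ ε : Fin n → ℤˣ, F (sgnMul ε x) := by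
  classical
  set S := {x : Fin n → ℝ | ∀ i, 0 < x i} with hS
  have hSm : MeasurableSet S := measurableSet_posOrthant n
  have hIntg : ∀ ε : Fin n → ℤˣ, Integrable (fun x => F (sgnMul ε x)) := fun ε =>
    (sgnMul_measurePreserving ε).integrable_comp_of_integrable hF
  have h2 : ∀ᵐ x : Fin n → ℝ, F x =
      ∑ ε : Fin n → ℤˣ, S.indicator (fun y => F (sgnMul ε y)) (sgnMul ε x) := by
    filter_upwards [ae_ne_zero n] with x hx
    rw [Finset.sum_eq_single (fun i => if 0 < x i then 1 else -1)]
    · rw [Set.indicator_of_mem, sgnMul_sgnMul]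
      intro i
      simp only [sgnMul]
      split_ifs with h
      · simpa using h
      · have := lt_of_le_of_ne (not_lt.mp h) (hx i)
        simpa using this
    · intro ε _ hε
      apply Set.indicator_of_notMem
      intro hmem
      apply hε
      ext i
      have := hmem i
      simp only [sgnMul] at this
      rcases Int.units_eq_one_or (ε i) with h | h
      · rw [h] at this
        simp at this
        simp [h, this]
      · rw [h] at this
        simp at this
        simp [h, not_lt.mpr this.le]
    · simp
  have h4 : ∀ ε : Fin n → ℤˣ,
      Integrable (fun x => S.indicator (fun y => F (sgnMul ε y)) (sgnMul ε x)) := fun ε =>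
    (sgnMul_measurePreserving ε).integrable_comp_of_integrable ((hIntg ε).indicator hSm)
  rw [integral_congr_ae h2, integral_finsetSum _ (fun ε _ => h4 ε),
    integral_finsetSum _ (fun ε _ => (hIntg ε).integrableOn)]
  refine Finset.sum_congr rfl fun ε _ => ?_
  rw [(sgnMul_measurePreserving ε).integral_comp (sgnMul_embedding ε), integral_indicator hSm]

/-! ### Determinant algebra -/

lemma prod_Iio_eq_vandermonde {n : ℕ} (x : Fin n → ℝ) :
    ∏ k, ∏ l ∈ Finset.Iio k, (x k - x l) = (Matrix.vandermonde x).det := by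
  rw [Matrix.det_vandermonde]
  apply Finset.prod_comm'
  simp

/-- the checkerboard Vandermonde matrix -/
def checker {n : ℕ} (x : Fin n → ℝ) : Matrix (Fin n) (Fin n) ℝ :=
  Matrix.of fun i k => if (i : ℕ) % 2 = (k : ℕ) % 2 then x i ^ (k : ℕ) else 0

lemma abs_vand_sgnMul {n : ℕ} (x : Fin n → ℝ) (hpos : ∀ i, 0 < x i) (hx : StrictMono x)
    (ε : Fin n → ℤˣ) :
    ∏ k, ∏ l ∈ Finset.Iio k, |sgnMul ε x k - sgnMul ε x l| =
      (Matrix.of fun i k : Fin n =>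
        (((ε i : ℤ) : ℝ)) ^ (i : ℕ) * (sgnMul ε x i) ^ (k : ℕ)).det := by
  have h1 : ∀ k, ∀ l ∈ Finset.Iio k, |sgnMul ε x k - sgnMul ε x l| =
      ((ε k : ℤ) : ℝ) * (sgnMul ε x k - sgnMul ε x l) := by
    intro k l hl
    have hlt : x l < x k := hx (Finset.mem_Iio.mp hl)
    have hl0 := hpos l
    simp only [sgnMul]
    rcases Int.units_eq_one_or (ε k) with h | h <;>
    rcases Int.units_eq_one_or (ε l) with h' | h' <;> rw [h, h'] <;> push_cast
    · rw [abs_of_pos] <;> linarith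
    · rw [abs_of_pos] <;> linarith
    · rw [abs_of_neg] <;> linarith
    · rw [abs_of_neg] <;> linarith
  have h2 := Matrix.det_mul_column (fun i : Fin n => (((ε i : ℤ) : ℝ)) ^ (i : ℕ))
    (Matrix.vandermonde (sgnMul ε x))
  simp only [Matrix.vandermonde_apply] at h2
  rw [h2, ← prod_Iio_eq_vandermonde, ← Finset.prod_mul_distrib]
  refine Finset.prod_congr rfl fun k _ => ?_
  rw [Finset.prod_congr rfl (h1 k), Finset.prod_mul_distrib]
  simp

lemma sum_abs_vand {n : ℕ} (x : Fin n → ℝ) (hpos : ∀ i, 0 < x i) (hx : StrictMono x) :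
    ∑ ε : Fin n → ℤˣ, ∏ k, ∏ l ∈ Finset.Iio k, |sgnMul ε x k - sgnMul ε x l| =
      2 ^ n * (checker x).det := by
  have h := MultilinearMap.map_sum
    (Matrix.detRowAlternating (n := Fin n) (R := ℝ)).toMultilinearMap
    (α := fun _ => ℤˣ)
    (fun i (u : ℤˣ) => fun k : Fin n => (((u : ℤ) : ℝ)) ^ (i : ℕ) * (((u : ℤ) : ℝ) * x i) ^ (k : ℕ))
  have h2 : (2 : ℝ) ^ n * (checker x).det = ((2 : ℝ) • checker x).det := by
    rw [Matrix.det_smul]; simp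
  rw [h2]
  simp only [abs_vand_sgnMul x hpos hx]
  refine Eq.trans ?_ (h.symm.trans ?_)
  · rfl
  · change Matrix.det _ = _
    congr 1
    ext i k
    rw [Finset.sum_apply]
    have huniv : (Finset.univ : Finset ℤˣ) = {1, -1} := by decide
    rw [huniv, Finset.sum_pair (by decide)]
    simp only [checker, Matrix.smul_apply, Matrix.of_apply, smul_eq_mul]
    push_cast
    rw [neg_one_mul, neg_pow (x i), ← mul_assoc, ← pow_add]
    split_ifs with hh
    · rw [Even.neg_one_pow (by rw [Nat.even_iff]; omega)]; ring
    · rw [Odd.neg_one_pow (by rw [Nat.odd_iff]; omega)]; ring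

/-- index map splitting positions by parity -/
def splitFun (μ m n : ℕ) (hμ : μ = 0 ∨ μ = 1) (hn : n = 2 * m + μ) :
    Fin m ⊕ Fin (m + μ) → Fin n :=
  Sum.elim (fun i => ⟨2 * i + μ, by have := i.2; omega⟩)
    (fun i => ⟨2 * i + 1 - μ, by have := i.2; omega⟩)

lemma splitFun_bijective (μ m n : ℕ) (hμ : μ = 0 ∨ μ = 1) (hn : n = 2 * m + μ) :
    Function.Bijective (splitFun μ m n hμ hn) := by
  rw [Fintype.bijective_iff_injective_and_card]
  constructor
  · rintro (i | i) (j | j) h <;> simp [splitFun] at h ⊢ <;> omega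
  · simp; omega

noncomputable def splitEquiv (μ m n : ℕ) (hμ : μ = 0 ∨ μ = 1) (hn : n = 2 * m + μ) :
    Fin m ⊕ Fin (m + μ) ≃ Fin n :=
  Equiv.ofBijective _ (splitFun_bijective μ m n hμ hn)

lemma splitEquiv_inl (μ m n : ℕ) (hμ : μ = 0 ∨ μ = 1) (hn : n = 2 * m + μ) (i : Fin m) :
    splitEquiv μ m n hμ hn (Sum.inl i) = ⟨2 * i + μ, by have := i.2; omega⟩ := rfl

lemma splitEquiv_inr (μ m n : ℕ) (hμ : μ = 0 ∨ μ = 1) (hn : n = 2 * m + μ) (i : Fin (m + μ)) :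
    splitEquiv μ m n hμ hn (Sum.inr i) = ⟨2 * i + 1 - μ, by have := i.2; omega⟩ := rfl

lemma checker_det_split (μ m n : ℕ) (hμ : μ = 0 ∨ μ = 1) (hn : n = 2 * m + μ) (x : Fin n → ℝ) :
    (checker x).det =
      (Matrix.of fun i k : Fin m =>
        x (splitEquiv μ m n hμ hn (Sum.inl i)) ^ (2 * (k : ℕ) + μ)).det *
      (Matrix.of fun i k : Fin (m + μ) =>
        x (splitEquiv μ m n hμ hn (Sum.inr i)) ^ (2 * (k : ℕ) + 1 - μ)).det := by
  rw [← Matrix.det_submatrix_equiv_self (splitEquiv μ m n hμ hn) (checker x),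
    ← Matrix.det_fromBlocks_zero₂₁ _ 0]
  congr 1
  ext i k
  rcases i with i | i <;> rcases k with k | k <;>
    simp only [Matrix.submatrix_apply, checker, Matrix.of_apply, splitEquiv_inl, splitEquiv_inr,
      Matrix.fromBlocks_apply₁₁, Matrix.fromBlocks_apply₁₂, Matrix.fromBlocks_apply₂₁,
      Matrix.fromBlocks_apply₂₂, Matrix.zero_apply]
  · rw [if_pos (by omega)]
  · rw [if_neg (by omega)]
  · rw [if_neg (by omega)]
  · rw [if_pos (by omega)]

lemma det_pow_vand (μ m : ℕ) (a : Fin m → ℝ) :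
    (Matrix.of fun i k : Fin m => a i ^ (2 * (k : ℕ) + μ)).det =
      (∏ i, a i ^ μ) * ∏ k, ∏ l ∈ Finset.Iio k, (a k ^ 2 - a l ^ 2) := by
  rw [prod_Iio_eq_vandermonde (fun i => a i ^ 2), ← Matrix.det_mul_column]
  congr 1
  ext i k
  simp [Matrix.vandermonde_apply, ← pow_mul, pow_add, mul_comm]

/-! ### Integrating out the interlacing variables -/

/-- the interval for the `i`-th interlacing variable -/
def gapInt {N : ℕ} (α : Fin N → ℝ) (i : Fin N) : Set ℝ :=
  {b | α i < b ∧ ∀ h : (i : ℕ) + 1 < N, b < α ⟨i + 1, h⟩}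

lemma det_gap_rows {N : ℕ} (α : Fin N → ℝ) (hα : StrictMono α) (φ : Fin N → ℝ → ℝ)
    (hφ : ∀ k, Integrable (φ k)) :
    (Matrix.of fun i k => ∫ b in gapInt α i, φ k b).det =
      (Matrix.of fun i k => ∫ b in Set.Ioi (α i), φ k b).det := by
  let V : Matrix (Fin N) (Fin N) ℝ := Matrix.of fun i l =>
    if l = i then 1 else if (l : ℕ) = i + 1 then -1 else 0
  have hV : V.det = 1 := by
    rw [Matrix.det_of_isUpperTriangular]
    · simp [V]
    · intro i j hij
      have h1 : (j : ℕ) < i := hij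
      simp only [V, Matrix.of_apply]
      rw [if_neg (by intro h; rw [h] at h1; omega), if_neg (by omega)]
  have hmul : (Matrix.of fun i k => ∫ b in gapInt α i, φ k b) =
      V * (Matrix.of fun i k => ∫ b in Set.Ioi (α i), φ k b) := by
    ext i k
    rw [Matrix.mul_apply]
    simp only [Matrix.of_apply, V]
    by_cases h : (i : ℕ) + 1 < N
    · have hne : i ≠ ⟨i + 1, h⟩ := by intro hh; have := congrArg Fin.val hh; simp at this
      rw [Finset.sum_eq_add i ⟨i + 1, h⟩ hne]
      · have hlt : α i < α ⟨i + 1, h⟩ := hα (by rw [Fin.lt_def]; simp)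
        have hg : gapInt α i = Set.Ioo (α i) (α ⟨i + 1, h⟩) := by
          ext b; simp [gapInt, h]
        rw [hg, ← integral_Ioc_eq_integral_Ioo, if_pos rfl, if_neg hne.symm, if_pos rfl,
          ← Set.Ioc_union_Ioi_eq_Ioi hlt.le,
          setIntegral_union (Set.Ioc_disjoint_Ioi le_rfl) measurableSet_Ioi
            (hφ k).integrableOn (hφ k).integrableOn]
        ring
      · intro c _ hc
        rw [if_neg hc.1, if_neg (fun h' => hc.2 (Fin.ext h')), zero_mul]
      · simp
      · simp
    · rw [Finset.sum_eq_single i]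
      · have hg : gapInt α i = Set.Ioi (α i) := by
          ext b; simp [gapInt, h]
        simp [hg]
      · intro c _ hc
        rw [if_neg hc, if_neg (by have := c.2; omega), zero_mul]
      · simp
  rw [hmul, Matrix.det_mul, hV, one_mul]

lemma integral_det_pi {N : ℕ} (I : Fin N → Set ℝ) (φ : Fin N → ℝ → ℝ)
    (hφ : ∀ k, Integrable (φ k)) :
    ∫ b in {b : Fin N → ℝ | ∀ i, b i ∈ I i}, (Matrix.of fun i k => φ k (b i)).det =
      (Matrix.of fun i k => ∫ b in I i, φ k b).det := by
  have hset : {b : Fin N → ℝ | ∀ i, b i ∈ I i} = Set.univ.pi I := by ext b; simp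
  rw [hset, volume_pi, Measure.restrict_pi_pi]
  have hd : ∀ M : Matrix (Fin N) (Fin N) ℝ, M.det =
      ∑ σ : Equiv.Perm (Fin N), ((Equiv.Perm.sign σ : ℤ) : ℝ) * ∏ i, M i (σ i) := by
    intro M
    rw [← Matrix.det_transpose, Matrix.det_apply']
    rfl
  simp only [hd, Matrix.of_apply]
  rw [integral_finsetSum]
  · refine Finset.sum_congr rfl fun σ _ => ?_
    rw [integral_const_mul]
    congr 1
    exact integral_fintype_prod_eq_prod (fun i => φ (σ i))
  · intro σ _
    refine Integrable.const_mul ?_ _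
    exact Integrable.fintype_prod (f := fun i => φ (σ i)) fun i => (hφ (σ i)).integrableOn

lemma integrable_gaussPow (j : ℕ) :
    Integrable (fun b : ℝ => b ^ j * Real.exp (-b ^ 2 / 2)) := by
  have := integrable_rpow_mul_exp_neg_mul_sq (b := 1 / 2) (by norm_num) (s := j)
    (by have : (0 : ℝ) ≤ j := Nat.cast_nonneg j
        linarith)
  refine this.congr (Filter.Eventually.of_forall fun b => ?_)
  simp only [Real.rpow_natCast]
  congr 2
  ring

/-- incomplete Gaussian moments -/
noncomputable def gaussTail (j : ℕ) (t : ℝ) : ℝ :=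
  ∫ b in Set.Ioi t, b ^ j * Real.exp (-b ^ 2 / 2)

lemma hasDerivAt_gauss (t : ℝ) :
    HasDerivAt (fun b : ℝ => Real.exp (-b ^ 2 / 2)) (-(t * Real.exp (-t ^ 2 / 2))) t := by
  have h : HasDerivAt (fun b : ℝ => -b ^ 2 / 2) (-t) t := by
    have := ((hasDerivAt_pow 2 t).neg).div_const 2
    convert! this using 1
    simp
    ring
  convert! h.exp using 1
  ring

lemma gaussTail_one (t : ℝ) : gaussTail 1 t = Real.exp (-t ^ 2 / 2) := by
  have hi : Integrable (fun b : ℝ => -(b * Real.exp (-b ^ 2 / 2))) := by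
    simpa using (integrable_gaussPow 1).neg
  have hi0 : Integrable (fun b : ℝ => Real.exp (-b ^ 2 / 2)) := by
    simpa using (integrable_gaussPow 0)
  have hlim := tendsto_zero_of_hasDerivAt_of_integrableOn_Ioi (a := t)
    (fun b _ => hasDerivAt_gauss b) hi.integrableOn hi0.integrableOn
  have := integral_Ioi_of_hasDerivAt_of_tendsto' (a := t)
    (fun b _ => hasDerivAt_gauss b) hi.integrableOn hlim
  rw [integral_neg] at this
  simp only [gaussTail, pow_one]
  linarith

lemma gaussTail_add_two (j : ℕ) (t : ℝ) :
    gaussTail (j + 2) t = t ^ (j + 1) * Real.exp (-t ^ 2 / 2) + (j + 1 : ℝ) * gaussTail j t := by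
  have hd : ∀ b : ℝ, HasDerivAt (fun b : ℝ => b ^ (j + 1) * Real.exp (-b ^ 2 / 2))
      ((j + 1 : ℝ) * (b ^ j * Real.exp (-b ^ 2 / 2)) - b ^ (j + 2) * Real.exp (-b ^ 2 / 2)) b := by
    intro b
    have := (hasDerivAt_pow (j + 1) b).mul (hasDerivAt_gauss b)
    convert! this using 1
    push_cast
    ring
  have hi : Integrable (fun b : ℝ =>
      (j + 1 : ℝ) * (b ^ j * Real.exp (-b ^ 2 / 2)) - b ^ (j + 2) * Real.exp (-b ^ 2 / 2)) :=
    ((integrable_gaussPow j).const_mul _).sub (integrable_gaussPow (j + 2))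
  have hlim := tendsto_zero_of_hasDerivAt_of_integrableOn_Ioi (a := t)
    (fun b _ => hd b) hi.integrableOn (integrable_gaussPow (j + 1)).integrableOn
  have := integral_Ioi_of_hasDerivAt_of_tendsto' (a := t)
    (fun b _ => hd b) hi.integrableOn hlim
  rw [integral_sub ((integrable_gaussPow j).const_mul _).integrableOn
    (integrable_gaussPow (j + 2)).integrableOn, integral_const_mul] at this
  simp only [gaussTail]
  linarith

/-- lower endpoints of the interlacing intervals -/
def lowEnd (μ m : ℕ) (hm : 1 ≤ m) (a : Fin m → ℝ) (i : Fin (m + μ)) : ℝ :=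
  if (i : ℕ) < μ then 0 else a ⟨i - μ, by have := i.2; omega⟩

lemma det_gaussTail (μ m : ℕ) (hμ : μ = 0 ∨ μ = 1) (hm : 1 ≤ m) :
    ∃ c : ℝ, ∀ a : Fin m → ℝ,
      (Matrix.of fun i k : Fin (m + μ) =>
        gaussTail (2 * (k : ℕ) + 1 - μ) (lowEnd μ m hm a i)).det =
      c * ((∏ i, a i ^ μ * Real.exp (-(a i) ^ 2 / 2)) *
        ∏ k, ∏ l ∈ Finset.Iio k, (a k ^ 2 - a l ^ 2)) := by
  obtain ⟨m, rfl⟩ : ∃ m', m = m' + 1 := ⟨m - 1, by omega⟩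
  rcases hμ with rfl | rfl
  · refine ⟨1, fun a => ?_⟩
    rw [one_mul, prod_Iio_eq_vandermonde (fun i => a i ^ 2), ← Matrix.det_mul_column]
    refine Matrix.det_eq_of_forall_col_eq_smul_add_pred (n := m) (fun k => 2 * (k : ℝ) + 2) ?_ ?_
    · intro i
      simp [lowEnd, gaussTail_one, Matrix.vandermonde_apply]
    · intro i k
      have h1 : 2 * (k.succ : ℕ) + 1 - 0 = (2 * (k : ℕ) + 1) + 2 := by simp; ring
      simp only [Matrix.of_apply, Matrix.vandermonde_apply, lowEnd]
      rw [h1, gaussTail_add_two]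
      simp [← pow_mul]
      ring
  · refine ⟨gaussTail 0 0, fun a => ?_⟩
    rw [prod_Iio_eq_vandermonde (fun i => a i ^ 2), ← Matrix.det_mul_column]
    have h := Matrix.det_eq_of_forall_col_eq_smul_add_pred (n := m + 1)
      (A := Matrix.of fun i k : Fin (m + 1 + 1) =>
        gaussTail (2 * (k : ℕ) + 1 - 1) (lowEnd 1 (m + 1) hm a i))
      (B := Matrix.of fun i k : Fin (m + 1 + 1) => if (k : ℕ) = 0 then
        gaussTail 0 (lowEnd 1 (m + 1) hm a i) else
        (lowEnd 1 (m + 1) hm a i) ^ (2 * (k : ℕ) - 1) *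
          Real.exp (-(lowEnd 1 (m + 1) hm a i) ^ 2 / 2))
      (fun k => 2 * (k : ℝ) + 1) (by intro i; simp) (by
        intro i k
        have h1 : 2 * (k.succ : ℕ) + 1 - 1 = (2 * (k : ℕ)) + 2 := by simp; ring
        have h2 : 2 * (k.succ : ℕ) - 1 = (2 * (k : ℕ)) + 1 := by simp; omega
        simp only [Matrix.of_apply]
        rw [h1, h2, gaussTail_add_two, if_neg (by simp)]
        simp)
    rw [h, Matrix.det_succ_row_zero, Fin.sum_univ_succ, Finset.sum_eq_zero, add_zero]
    · simp only [Matrix.of_apply]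
      congr 1
      · simp [lowEnd]
      · congr 1
        ext i k
        have h2 : 2 * (k.succ : ℕ) - 1 = (2 * (k : ℕ)) + 1 := by simp; omega
        simp only [Matrix.submatrix_apply, Matrix.of_apply, Fin.zero_succAbove, h2]
        simp [lowEnd, Matrix.vandermonde_apply, ← pow_mul]
        ring
    · intro k _
      have h2 : 2 * (k.succ : ℕ) - 1 = (2 * (k : ℕ)) + 1 := by simp; omega
      simp only [Matrix.of_apply, h2]
      simp [lowEnd]

/-! ### Counting, integrability, Fubini -/

/-- number of coordinates below `s` -/
noncomputable def cntLt {n : ℕ} (s : ℝ) (x : Fin n → ℝ) : ℕ :=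
  (Finset.univ.filter fun i => x i < s).card

lemma cntLt_perm {n : ℕ} (s : ℝ) (x : Fin n → ℝ) (σ : Equiv.Perm (Fin n)) :
    cntLt s (x ∘ σ) = cntLt s x := by
  unfold cntLt
  rw [Finset.card_filter, Finset.card_filter]
  exact Equiv.sum_comp σ (fun i => if x i < s then 1 else 0)

lemma measurable_cntLt {n : ℕ} (s : ℝ) : Measurable (fun x : Fin n → ℝ => cntLt s x) := by
  unfold cntLt
  simp only [Finset.card_filter]
  refine Finset.measurable_sum _ fun i _ => ?_
  exact Measurable.ite (measurableSet_lt (measurable_pi_apply i) measurable_const)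
    measurable_const measurable_const

lemma lt_iff_lt_cntLt {n : ℕ} (s : ℝ) (x : Fin n → ℝ) (hx : StrictMono x) (i : Fin n) :
    x i < s ↔ (i : ℕ) < cntLt s x := by
  constructor
  · intro h
    have : (Finset.Iic i).card ≤ cntLt s x := by
      apply Finset.card_le_card
      intro j hj
      simp at hj ⊢
      exact lt_of_le_of_lt (hx.monotone hj) h
    rw [Fin.card_Iic] at this
    omega
  · intro h
    by_contra hc
    have : cntLt s x ≤ (Finset.Iio i).card := by
      apply Finset.card_le_card
      intro j hj
      simp at hj ⊢
      exact hx.lt_iff_lt.mp (lt_of_lt_of_le hj (not_lt.mp hc))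
    rw [Fin.card_Iio] at this
    omega

lemma cntLt_split (μ m n : ℕ) (hμ : μ = 0 ∨ μ = 1) (hn : n = 2 * m + μ) (s : ℝ)
    (x : Fin n → ℝ) (hx : StrictMono x) :
    (cntLt s x + 1 - μ) / 2 = cntLt s (fun i => x (splitEquiv μ m n hμ hn (Sum.inl i))) := by
  have hc : cntLt s x ≤ n := by
    have := Finset.card_filter_le (Finset.univ : Finset (Fin n)) (fun i => x i < s)
    simpa [cntLt] using this
  conv_rhs => unfold cntLt
  simp only [lt_iff_lt_cntLt s x hx, splitEquiv_inl]
  generalize cntLt s x = c at *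
  have : ∀ i : Fin m, 2 * (i : ℕ) + μ < c ↔ (i : ℕ) < (c + 1 - μ) / 2 := by
    intro i; omega
  simp only [this]
  rw [Fin.card_filter_val_lt]
  omega

lemma det_row_expand {N : ℕ} (M : Matrix (Fin N) (Fin N) ℝ) : M.det =
    ∑ σ : Equiv.Perm (Fin N), ((Equiv.Perm.sign σ : ℤ) : ℝ) * ∏ i, M i (σ i) := by
  rw [← Matrix.det_transpose, Matrix.det_apply']
  rfl

lemma abs_prod_eq {n : ℕ} (x : Fin n → ℝ) :
    ∏ k, ∏ l ∈ Finset.Iio k, |x k - x l| = |(Matrix.vandermonde x).det| := by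
  rw [← prod_Iio_eq_vandermonde]
  simp [Finset.abs_prod]

lemma sq_prod_eq {n : ℕ} (x : Fin n → ℝ) :
    ∏ k, ∏ l ∈ Finset.Iio k, (x k - x l) ^ 2 = (Matrix.vandermonde x).det ^ 2 := by
  rw [← prod_Iio_eq_vandermonde]
  simp [Finset.prod_pow]

lemma vandermonde_perm {n : ℕ} (x : Fin n → ℝ) (σ : Equiv.Perm (Fin n)) :
    (Matrix.vandermonde (x ∘ σ)).det =
      ((Equiv.Perm.sign σ : ℤ) : ℝ) * (Matrix.vandermonde x).det := by
  rw [← Matrix.det_permute]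
  rfl

lemma sign_cast (n : ℕ) (σ : Equiv.Perm (Fin n)) :
    ((Equiv.Perm.sign σ : ℤ) : ℝ) = 1 ∨ ((Equiv.Perm.sign σ : ℤ) : ℝ) = -1 := by
  rcases Int.units_eq_one_or (Equiv.Perm.sign σ) with h | h <;> simp [h]

lemma goeTotal_perm {n : ℕ} (x : Fin n → ℝ) (σ : Equiv.Perm (Fin n)) :
    goeTotalIntegrand n (x ∘ σ) = goeTotalIntegrand n x := by
  unfold goeTotalIntegrand
  rw [abs_prod_eq, abs_prod_eq, vandermonde_perm]
  congr 1
  · exact Equiv.prod_comp σ (fun i => Real.exp (-(x i) ^ 2 / 2))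
  · rcases sign_cast n σ with h | h <;> simp [h]

lemma lueTotal_perm {m : ℕ} (μ : ℕ) (x : Fin m → ℝ) (σ : Equiv.Perm (Fin m)) :
    lueTotalIntegrand m μ (x ∘ σ) = lueTotalIntegrand m μ x := by
  unfold lueTotalIntegrand
  rw [sq_prod_eq, sq_prod_eq, vandermonde_perm]
  congr 1
  · exact Equiv.prod_comp σ (fun i => (x i) ^ ((μ : ℝ) - 1 / 2) * Real.exp (-(x i)))
  · rcases sign_cast m σ with h | h <;> simp [h]

lemma integrable_goeTotal (n : ℕ) : Integrable (goeTotalIntegrand n) := by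
  have h : goeTotalIntegrand n = fun x => ‖∑ σ : Equiv.Perm (Fin n),
      ((Equiv.Perm.sign σ : ℤ) : ℝ) * ∏ i, (x i ^ (σ i : ℕ) * Real.exp (-(x i) ^ 2 / 2))‖ := by
    ext x
    unfold goeTotalIntegrand
    rw [abs_prod_eq, det_row_expand, Real.norm_eq_abs]
    have : 0 ≤ ∏ i, Real.exp (-(x i) ^ 2 / 2) := Finset.prod_nonneg fun i _ => (Real.exp_pos _).le
    nth_rw 1 [← abs_of_nonneg this]
    rw [← abs_mul, Finset.mul_sum]
    congr 1
    refine Finset.sum_congr rfl fun σ _ => ?_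
    rw [Finset.prod_mul_distrib]
    simp only [Matrix.vandermonde_apply]
    ring
  rw [h]
  refine Integrable.norm ?_
  refine integrable_finsetSum _ fun σ _ => Integrable.const_mul ?_ _
  exact Integrable.fintype_prod (f := fun i b => b ^ (σ i : ℕ) * Real.exp (-b ^ 2 / 2))
    fun i => integrable_gaussPow _

lemma posOrthant_eq (m : ℕ) : {y : Fin m → ℝ | ∀ i, 0 < y i} =
    Set.univ.pi (fun _ => Set.Ioi (0 : ℝ)) := by
  ext y; simp

lemma integrableOn_lueTotal (m μ : ℕ) :
    IntegrableOn (lueTotalIntegrand m μ) {y : Fin m → ℝ | ∀ i, 0 < y i} := by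
  have h : lueTotalIntegrand m μ = fun x => ∑ σ : Equiv.Perm (Fin m), ∑ τ : Equiv.Perm (Fin m),
      (((Equiv.Perm.sign σ : ℤ) : ℝ) * ((Equiv.Perm.sign τ : ℤ) : ℝ)) *
        ∏ i, (x i ^ (σ i : ℕ) * x i ^ (τ i : ℕ) *
          ((x i) ^ ((μ : ℝ) - 1 / 2) * Real.exp (-(x i)))) := by
    ext x
    unfold lueTotalIntegrand
    rw [sq_prod_eq, det_row_expand, sq, Finset.sum_mul_sum, Finset.mul_sum]
    refine Finset.sum_congr rfl fun σ _ => ?_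
    rw [Finset.mul_sum]
    refine Finset.sum_congr rfl fun τ _ => ?_
    simp only [Finset.prod_mul_distrib, Matrix.vandermonde_apply]
    ring
  rw [h, posOrthant_eq, IntegrableOn, volume_pi, Measure.restrict_pi_pi]
  refine integrable_finsetSum _ fun σ _ => integrable_finsetSum _ fun τ _ =>
    Integrable.const_mul ?_ _
  refine Integrable.fintype_prod (f := fun i b => b ^ (σ i : ℕ) * b ^ (τ i : ℕ) *
          (b ^ ((μ : ℝ) - 1 / 2) * Real.exp (-b))) fun i => ?_
  have h0 : (0 : ℝ) < (σ i : ℕ) + (τ i : ℕ) + μ + 1 / 2 := by positivity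
  have hG := Real.GammaIntegral_convergent h0
  refine IntegrableOn.congr_fun hG ?_ measurableSet_Ioi
  intro b hb
  have hb : 0 < b := hb
  simp only
  have he : ((σ i : ℕ) + (τ i : ℕ) + μ + 1 / 2 - 1 : ℝ) =
    (σ i : ℕ) + (τ i : ℕ) + ((μ : ℝ) - 1 / 2) := by ring
  rw [he, Real.rpow_add hb, Real.rpow_add hb, Real.rpow_natCast, Real.rpow_natCast]
  ring

/-- the open Weyl chamber -/
def chamber (n : ℕ) : Set (Fin n → ℝ) := {x | (∀ i, 0 < x i) ∧ StrictMono x}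

lemma measurableSet_chamber (n : ℕ) : MeasurableSet (chamber n) :=
  (measurableSet_posOrthant n).inter (measurableSet_strictMono n)

lemma lowEnd_strictMono (μ m : ℕ) (hm : 1 ≤ m) (a : Fin m → ℝ) (ha : a ∈ chamber m)
    (hμ : μ = 0 ∨ μ = 1) : StrictMono (lowEnd μ m hm a) := by
  intro i j hij
  have hij' : (i : ℕ) < j := hij
  unfold lowEnd
  rw [if_neg (show ¬ (j : ℕ) < μ by omega)]
  split_ifs with h
  · exact ha.1 _
  · apply ha.2
    rw [Fin.lt_def]
    simp only
    omega

lemma mem_chamber_split (μ m n : ℕ) (hμ : μ = 0 ∨ μ = 1) (hn : n = 2 * m + μ) (hm : 1 ≤ m)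
    (x : Fin n → ℝ) :
    x ∈ chamber n ↔ (fun i => x (splitEquiv μ m n hμ hn (Sum.inl i))) ∈ chamber m ∧
      ∀ j, x (splitEquiv μ m n hμ hn (Sum.inr j)) ∈
        gapInt (lowEnd μ m hm (fun i => x (splitEquiv μ m n hμ hn (Sum.inl i)))) j := by
  simp only [splitEquiv_inl, splitEquiv_inr, gapInt, lowEnd, Set.mem_ofPred_eq]
  constructor
  · rintro ⟨hp, hx⟩
    refine ⟨⟨fun i => hp _, fun i j hij => hx ?_⟩, fun j => ⟨?_, fun h => ?_⟩⟩
    · have : (i : ℕ) < j := hij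
      rw [Fin.lt_def]; simp only; omega
    · split_ifs with h
      · exact hp _
      · apply hx
        rw [Fin.lt_def]; simp only; omega
    · rw [if_neg (by omega)]
      apply hx
      rw [Fin.lt_def]; simp only; omega
  · rintro ⟨⟨hp, ha⟩, hb⟩
    have hstep : ∀ i : ℕ, ∀ h : i + 1 < n, x ⟨i, by omega⟩ < x ⟨i + 1, h⟩ := by
      intro i h
      by_cases hpar : i % 2 = μ
      · -- `i = 2 j + μ` is kept, `i + 1` is integrated
        have h1 := (hb ⟨i / 2 + μ, by omega⟩).1
        rw [if_neg (by simp)] at h1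
        convert h1 using 3
        · simp only; omega
        · simp only; omega
      · have h1 := (hb ⟨i / 2, by omega⟩).2 (by simp only; omega)
        rw [if_neg (by simp only; omega)] at h1
        convert h1 using 3
        · simp only; omega
        · simp only; omega
    have hx : StrictMono x := by
      obtain ⟨n, rfl⟩ : ∃ n', n = n' + 1 := ⟨n - 1, by omega⟩
      rw [Fin.strictMono_iff_lt_succ]
      intro i
      exact hstep i (by omega)
    refine ⟨fun i => ?_, hx⟩
    have h0 : 0 < x ⟨0, by omega⟩ := by
      rcases hμ with h | h
      · have := hp ⟨0, by omega⟩
        convert this using 2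
        simp [h]
      · have := (hb ⟨0, by omega⟩).1
        rw [if_pos (by simp [h])] at this
        convert this using 2
        simp [h]
    refine lt_of_lt_of_le h0 (hx.monotone ?_)
    rw [Fin.le_def]; simp

lemma measurableSet_gapInt {N : ℕ} (α : Fin N → ℝ) (i : Fin N) : MeasurableSet (gapInt α i) := by
  by_cases h : (i : ℕ) + 1 < N
  · have hg : gapInt α i = Set.Ioo (α i) (α ⟨i + 1, h⟩) := by
      ext b; simp [gapInt, h]
    rw [hg]; exact measurableSet_Ioo
  · have hg : gapInt α i = Set.Ioi (α i) := by
      ext b; simp [gapInt, h]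
    rw [hg]; exact measurableSet_Ioi

/-- splitting coordinates as a measurable equivalence -/
noncomputable def splitME (μ m n : ℕ) (hμ : μ = 0 ∨ μ = 1) (hn : n = 2 * m + μ) :
    (Fin n → ℝ) ≃ᵐ (Fin m → ℝ) × (Fin (m + μ) → ℝ) :=
  (MeasurableEquiv.piCongrLeft (fun _ : Fin n => ℝ) (splitEquiv μ m n hμ hn)).symm.trans
    (MeasurableEquiv.sumPiEquivProdPi fun _ : Fin m ⊕ Fin (m + μ) => ℝ)

lemma splitME_apply (μ m n : ℕ) (hμ : μ = 0 ∨ μ = 1) (hn : n = 2 * m + μ) (x : Fin n → ℝ) :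
    splitME μ m n hμ hn x = (fun i => x (splitEquiv μ m n hμ hn (Sum.inl i)),
      fun i => x (splitEquiv μ m n hμ hn (Sum.inr i))) := rfl

lemma splitME_mp (μ m n : ℕ) (hμ : μ = 0 ∨ μ = 1) (hn : n = 2 * m + μ) :
    MeasurePreserving (splitME μ m n hμ hn) :=
  ((volume_measurePreserving_piCongrLeft (fun _ : Fin n => ℝ) (splitEquiv μ m n hμ hn)).symm).trans
    (volume_measurePreserving_sumPiEquivProdPi fun _ : Fin m ⊕ Fin (m + μ) => ℝ)

lemma integral_chamber_split (μ m n : ℕ) (hμ : μ = 0 ∨ μ = 1) (hn : n = 2 * m + μ) (hm : 1 ≤ m)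
    (f : (Fin n → ℝ) → ℝ) (P : (Fin m → ℝ) → ℝ) (Q : (Fin (m + μ) → ℝ) → ℝ)
    (hf : IntegrableOn f (chamber n))
    (hPQ : ∀ x ∈ chamber n, f x = P (fun i => x (splitEquiv μ m n hμ hn (Sum.inl i))) *
      Q (fun i => x (splitEquiv μ m n hμ hn (Sum.inr i)))) :
    ∫ x in chamber n, f x = ∫ a in chamber m, P a *
      ∫ b in {b : Fin (m + μ) → ℝ | ∀ i, b i ∈ gapInt (lowEnd μ m hm a) i}, Q b := by
  classical
  let h : (Fin m → ℝ) × (Fin (m + μ) → ℝ) → ℝ := fun z =>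
    (chamber m).indicator (fun a => P a *
      ({b : Fin (m + μ) → ℝ | ∀ i, b i ∈ gapInt (lowEnd μ m hm a) i}.indicator Q z.2)) z.1
  have hfh : (chamber n).indicator f = fun x => h (splitME μ m n hμ hn x) := by
    ext x
    simp only [h, splitME_apply]
    by_cases hx : x ∈ chamber n
    · have hx' := (mem_chamber_split μ m n hμ hn hm x).mp hx
      rw [Set.indicator_of_mem hx, Set.indicator_of_mem hx'.1, Set.indicator_of_mem, hPQ x hx]
      exact hx'.2
    · rw [Set.indicator_of_notMem hx]
      rw [mem_chamber_split μ m n hμ hn hm x, not_and] at hx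
      by_cases ha : (fun i => x (splitEquiv μ m n hμ hn (Sum.inl i))) ∈ chamber m
      · rw [Set.indicator_of_mem ha, Set.indicator_of_notMem, mul_zero]
        exact hx ha
      · rw [Set.indicator_of_notMem ha]
  have hIntg : Integrable h := by
    have h1 : Integrable (fun x => h (splitME μ m n hμ hn x)) := by
      rw [← hfh]; exact (integrable_indicator_iff (measurableSet_chamber n)).mpr hf
    exact ((splitME_mp μ m n hμ hn).integrable_comp_emb
      (splitME μ m n hμ hn).measurableEmbedding).mp h1
  rw [← integral_indicator (measurableSet_chamber n), hfh,
    (splitME_mp μ m n hμ hn).integral_comp (splitME μ m n hμ hn).measurableEmbedding]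
  rw [Measure.volume_eq_prod, integral_prod _ hIntg,
    ← integral_indicator (measurableSet_chamber m)]
  congr 1
  ext a
  by_cases ha : a ∈ chamber m
  · simp only [h, Set.indicator_of_mem ha]
    rw [integral_const_mul, integral_indicator]
    have : {b : Fin (m + μ) → ℝ | ∀ i, b i ∈ gapInt (lowEnd μ m hm a) i} =
      Set.univ.pi (gapInt (lowEnd μ m hm a)) := by ext b; simp
    rw [this]
    exact MeasurableSet.univ_pi fun i => measurableSet_gapInt _ i
  · simp [h, Set.indicator_of_notMem ha]

/-! ### The two reductions to the Weyl chamber -/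

/-- the common reduced density -/
noncomputable def redDens (μ m : ℕ) (a : Fin m → ℝ) : ℝ :=
  ((∏ i, a i ^ μ * Real.exp (-(a i) ^ 2 / 2)) *
        ∏ k, ∏ l ∈ Finset.Iio k, (a k ^ 2 - a l ^ 2)) ^ 2

lemma image_sq_chamber (m : ℕ) :
    (fun a : Fin m → ℝ => fun i => a i ^ 2) '' chamber m = chamber m := by
  ext y
  constructor
  · rintro ⟨a, ha, rfl⟩
    refine ⟨fun i => pow_pos (ha.1 i) 2, fun i j hij => ?_⟩
    exact pow_lt_pow_left₀ (ha.2 hij) (ha.1 i).le two_ne_zero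
  · intro hy
    refine ⟨fun i => Real.sqrt (y i), ⟨fun i => Real.sqrt_pos.mpr (hy.1 i), fun i j hij => ?_⟩, ?_⟩
    · exact Real.sqrt_lt_sqrt (hy.1 i).le (hy.2 hij)
    · ext i
      exact Real.sq_sqrt (hy.1 i).le

lemma integral_chamber_sq (m : ℕ) (F : (Fin m → ℝ) → ℝ) :
    ∫ y in chamber m, F y = ∫ a in chamber m, (∏ i, (2 * a i)) * F (fun i => a i ^ 2) := by
  have h := integral_image_eq_integral_abs_det_fderiv_smul (volume : Measure (Fin m → ℝ))
    (s := chamber m) (f := fun a i => a i ^ 2)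
    (f' := fun a => ContinuousLinearMap.pi fun i =>
      ((2 * a i) • ContinuousLinearMap.id ℝ ℝ).comp (ContinuousLinearMap.proj i))
    (measurableSet_chamber m) (by
      intro a _
      apply HasFDerivAt.hasFDerivWithinAt
      rw [hasFDerivAt_pi']
      intro i
      have h1 : HasFDerivAt (fun t : ℝ => t ^ 2) ((2 * a i) • ContinuousLinearMap.id ℝ ℝ) (a i) := by
        have := (hasDerivAt_pow 2 (a i)).hasFDerivAt
        convert! this using 1
        ext
        simp
      have h2 : HasFDerivAt (fun a : Fin m → ℝ => a i) (ContinuousLinearMap.proj i) a :=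
        hasFDerivAt_apply (𝕜 := ℝ) i a
      exact h1.comp a h2)
    (by
      intro a ha b hb hab
      ext i
      have := congrFun hab i
      simp only at this
      exact (pow_left_inj₀ (ha.1 i).le (hb.1 i).le two_ne_zero).mp this)
    F
  rw [image_sq_chamber] at h
  rw [h]
  refine setIntegral_congr_fun (measurableSet_chamber m) fun a ha => ?_
  simp only [smul_eq_mul]
  congr 1
  have hdet : (ContinuousLinearMap.pi fun i : Fin m =>
      ((2 * a i) • ContinuousLinearMap.id ℝ ℝ).comp
        (ContinuousLinearMap.proj (φ := fun _ : Fin m => ℝ) i)).det = ∏ i, (2 * a i) := by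
    have := LinearMap.det_pi (R := ℝ) (M := ℝ) (fun i : Fin m => (2 * a i) • LinearMap.id)
    simp only [LinearMap.det_smul, LinearMap.det_id, Module.finrank_self, pow_one, mul_one] at this
    rw [← this]
    rfl
  rw [hdet, abs_of_pos]
  exact Finset.prod_pos fun i _ => mul_pos two_pos (ha.1 i)

lemma bdd_mul_integrable {n : ℕ} (ν : Measure (Fin n → ℝ)) (u F : (Fin n → ℝ) → ℝ)
    (hu : Measurable u) (hb : ∀ x, |u x| ≤ 1) (hF : Integrable F ν) :
    Integrable (fun x => u x * F x) ν := by
  refine hF.bdd_mul (c := 1) hu.aestronglyMeasurable ?_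
  exact Filter.Eventually.of_forall fun x => hb x

lemma lue_reduce (μ m : ℕ) (s : ℝ) (hs : 0 < s) (g : ℕ → ℝ) (hg : ∀ c, |g c| ≤ 1) :
    ∫ y in {y : Fin m → ℝ | ∀ i, 0 < y i}, g (cntLt (s ^ 2) y) * lueTotalIntegrand m μ y =
      (m.factorial : ℝ) * 2 ^ m * ∫ a in chamber m, g (cntLt s a) * redDens μ m a := by
  set S := {y : Fin m → ℝ | ∀ i, 0 < y i} with hS
  have hSm : MeasurableSet S := measurableSet_posOrthant m
  have hIntg : IntegrableOn (fun y => g (cntLt (s ^ 2) y) * lueTotalIntegrand m μ y) S :=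
    bdd_mul_integrable _ _ _ ((measurable_from_nat (f := g)).comp (measurable_cntLt _))
      (fun x => hg _) (integrableOn_lueTotal m μ)
  rw [← integral_indicator hSm, integral_perm_symm m _ ((integrable_indicator_iff hSm).mpr hIntg),
    setIntegral_indicator hSm]
  · have : {x : Fin m → ℝ | StrictMono x} ∩ S = chamber m := by
      rw [Set.inter_comm]; rfl
    rw [this, integral_chamber_sq, mul_assoc]
    congr 1
    rw [← integral_const_mul]
    refine setIntegral_congr_fun (measurableSet_chamber m) fun a ha => ?_
    have hc : cntLt (s ^ 2) (fun i => a i ^ 2) = cntLt s a := by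
      unfold cntLt
      congr 1
      ext i
      simp only [Finset.mem_filter, Finset.mem_univ, true_and]
      exact pow_lt_pow_iff_left₀ (ha.1 i).le hs.le two_ne_zero
    rw [hc]
    have hw : (∏ i, (2 * a i)) * ∏ i, ((a i ^ 2) ^ ((μ : ℝ) - 1 / 2) * Real.exp (-(a i ^ 2))) =
        2 ^ m * (∏ i, a i ^ μ * Real.exp (-(a i) ^ 2 / 2)) ^ 2 := by
      have h2 : (2 : ℝ) ^ m = ∏ _i : Fin m, 2 := by simp
      rw [h2, ← Finset.prod_pow, ← Finset.prod_mul_distrib, ← Finset.prod_mul_distrib]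
      refine Finset.prod_congr rfl fun i _ => ?_
      have hi := ha.1 i
      have h3 : (a i ^ 2) ^ ((μ : ℝ) - 1 / 2) * a i = a i ^ μ * a i ^ μ := by
        rw [Real.rpow_sub (by positivity), Real.rpow_natCast, ← Real.sqrt_eq_rpow,
          Real.sqrt_sq hi.le]
        field_simp
        ring
      have h4 : Real.exp (-(a i ^ 2)) = Real.exp (-(a i) ^ 2 / 2) * Real.exp (-(a i) ^ 2 / 2) := by
        rw [← Real.exp_add]; congr 1; ring
      rw [h4]
      linear_combination 2 * Real.exp (-(a i) ^ 2 / 2) * Real.exp (-(a i) ^ 2 / 2) * h3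
    unfold lueTotalIntegrand redDens
    rw [sq_prod_eq (fun i => a i ^ 2), prod_Iio_eq_vandermonde (fun i => a i ^ 2), mul_pow]
    linear_combination g (cntLt s a) * (Matrix.vandermonde fun i => a i ^ 2).det ^ 2 * hw
  · intro σ x
    have hmem : x ∘ σ ∈ S ↔ x ∈ S := by
      constructor
      · intro h i
        have := h (σ.symm i)
        simpa using this
      · intro h i
        exact h (σ i)
    by_cases hx : x ∈ S
    · rw [Set.indicator_of_mem hx, Set.indicator_of_mem (hmem.mpr hx), cntLt_perm, lueTotal_perm]
    · rw [Set.indicator_of_notMem hx, Set.indicator_of_notMem (fun h => hx (hmem.mp h))]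

lemma sgnMul_abs {n : ℕ} (ε : Fin n → ℤˣ) (x : Fin n → ℝ) (i : Fin n) :
    |sgnMul ε x i| = |x i| := by
  rcases Int.units_eq_one_or (ε i) with h | h <;> simp [sgnMul, h]

lemma goe_reduce (μ m n : ℕ) (hμ : μ = 0 ∨ μ = 1) (hm : 1 ≤ m) (hn : n = 2 * m + μ) :
    ∃ C : ℝ, ∀ (s : ℝ) (g : ℕ → ℝ), (∀ c, |g c| ≤ 1) →
      ∫ x, g ((cntLt s (fun i => |x i|) + 1 - μ) / 2) * goeTotalIntegrand n x =
        C * ∫ a in chamber m, g (cntLt s a) * redDens μ m a := by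
  obtain ⟨c, hc⟩ := det_gaussTail μ m hμ hm
  refine ⟨n.factorial * (2 ^ n * c), fun s g hg => ?_⟩
  set G : (Fin n → ℝ) → ℝ := fun x =>
    g ((cntLt s (fun i => |x i|) + 1 - μ) / 2) * goeTotalIntegrand n x with hG
  set S := {y : Fin n → ℝ | ∀ i, 0 < y i} with hS
  have hSm : MeasurableSet S := measurableSet_posOrthant n
  have hGint : Integrable G := by
    refine bdd_mul_integrable _ _ _ ?_ (fun x => hg _) (integrable_goeTotal n)
    have h1 : Measurable (fun x : Fin n → ℝ => cntLt s (fun i => |x i|)) :=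
      (measurable_cntLt s).comp (measurable_pi_lambda _ fun i => (measurable_pi_apply i).abs)
    exact (measurable_from_nat (f := fun c => g ((c + 1 - μ) / 2))).comp h1
  have hHint : Integrable (fun x => ∑ ε : Fin n → ℤˣ, G (sgnMul ε x)) :=
    integrable_finsetSum _ fun ε _ =>
      (sgnMul_measurePreserving ε).integrable_comp_of_integrable hGint
  have hGperm : ∀ (σ : Equiv.Perm (Fin n)) x, G (x ∘ σ) = G x := by
    intro σ x
    simp only [hG]
    rw [goeTotal_perm]
    have : (fun i => |(x ∘ σ) i|) = (fun i => |x i|) ∘ σ := rfl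
    rw [this, cntLt_perm]
  have hHperm : ∀ (σ : Equiv.Perm (Fin n)) x, ∑ ε : Fin n → ℤˣ, G (sgnMul ε (x ∘ σ)) =
      ∑ ε : Fin n → ℤˣ, G (sgnMul ε x) := by
    intro σ x
    rw [← Equiv.sum_comp (σ.symm.arrowCongr (Equiv.refl ℤˣ))]
    refine Finset.sum_congr rfl fun ε _ => ?_
    rw [← hGperm σ (sgnMul ε x)]
    congr 1
  rw [integral_sign_symm n G hGint, ← integral_indicator hSm,
    integral_perm_symm n _ (hHint.indicator hSm), setIntegral_indicator hSm]
  · have : {x : Fin n → ℝ | StrictMono x} ∩ S = chamber n := by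
      rw [Set.inter_comm]; rfl
    rw [this, mul_assoc, integral_chamber_split μ m n hμ hn hm _
      (fun a => 2 ^ n * (g (cntLt s a) * ((∏ i, Real.exp (-(a i) ^ 2 / 2)) *
        (Matrix.of fun i k : Fin m => a i ^ (2 * (k : ℕ) + μ)).det)))
      (fun b => (Matrix.of fun i k : Fin (m + μ) =>
        b i ^ (2 * (k : ℕ) + 1 - μ) * Real.exp (-(b i) ^ 2 / 2)).det)
      hHint.integrableOn]
    · congr 1
      rw [← integral_const_mul]
      refine setIntegral_congr_fun (measurableSet_chamber m) fun a ha => ?_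
      have h1 := integral_det_pi (gapInt (lowEnd μ m hm a))
        (fun (k : Fin (m + μ)) b => b ^ (2 * (k : ℕ) + 1 - μ) * Real.exp (-b ^ 2 / 2))
        (fun k => integrable_gaussPow _)
      have h2 := det_gap_rows (lowEnd μ m hm a) (lowEnd_strictMono μ m hm a ha hμ)
        (fun (k : Fin (m + μ)) b => b ^ (2 * (k : ℕ) + 1 - μ) * Real.exp (-b ^ 2 / 2))
        (fun k => integrable_gaussPow _)
      have h3 := hc a
      simp only [gaussTail] at h3
      rw [h1, h2, h3, det_pow_vand, redDens, Finset.prod_mul_distrib]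
      ring
    · intro x hx
      have hcnt : ∀ ε : Fin n → ℤˣ, cntLt s (fun i => |sgnMul ε x i|) = cntLt s x := by
        intro ε
        congr 1
        ext i
        rw [sgnMul_abs, abs_of_pos (hx.1 i)]
      have hexp : ∀ ε : Fin n → ℤˣ, ∏ i, Real.exp (-(sgnMul ε x i) ^ 2 / 2) =
          ∏ i, Real.exp (-(x i) ^ 2 / 2) := by
        intro ε
        refine Finset.prod_congr rfl fun i _ => ?_
        rw [← sq_abs, sgnMul_abs, sq_abs]
      simp only [hG, goeTotalIntegrand, hcnt, hexp]
      rw [← Finset.mul_sum, ← Finset.mul_sum, sum_abs_vand x hx.1 hx.2,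
        checker_det_split μ m n hμ hn, cntLt_split μ m n hμ hn s x hx.2]
      have hsplit : ∏ i, Real.exp (-(x i) ^ 2 / 2) =
          (∏ i, Real.exp (-(x (splitEquiv μ m n hμ hn (Sum.inl i))) ^ 2 / 2)) *
          ∏ i, Real.exp (-(x (splitEquiv μ m n hμ hn (Sum.inr i))) ^ 2 / 2) := by
        rw [← Equiv.prod_comp (splitEquiv μ m n hμ hn), Fintype.prod_sum_type]
      have hcol := Matrix.det_mul_column
        (fun i : Fin (m + μ) => Real.exp (-(x (splitEquiv μ m n hμ hn (Sum.inr i))) ^ 2 / 2))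
        (Matrix.of fun i k : Fin (m + μ) =>
          x (splitEquiv μ m n hμ hn (Sum.inr i)) ^ (2 * (k : ℕ) + 1 - μ))
      simp only [Matrix.of_apply] at hcol
      simp only [mul_comm _ (Real.exp _)]
      rw [hcol, hsplit]
      ring
  · intro σ x
    have hmem : x ∘ σ ∈ S ↔ x ∈ S := by
      constructor
      · intro h i
        have := h (σ.symm i)
        simpa using this
      · intro h i
        exact h (σ i)
    by_cases hx : x ∈ S
    · rw [Set.indicator_of_mem hx, Set.indicator_of_mem (hmem.mpr hx), hHperm]
    · rw [Set.indicator_of_notMem hx, Set.indicator_of_notMem (fun h => hx (hmem.mp h))]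

lemma goeTotal_integral_pos (n : ℕ) : 0 < ∫ x, goeTotalIntegrand n x := by
  refine integral_pos_of_integrable_nonneg_nonzero (x := fun i => (i : ℝ)) ?_
    (integrable_goeTotal n) ?_ ?_
  · unfold goeTotalIntegrand
    fun_prop
  · intro x
    unfold goeTotalIntegrand
    positivity
  · unfold goeTotalIntegrand
    refine mul_ne_zero (Finset.prod_ne_zero_iff.mpr fun i _ => (Real.exp_pos _).ne')
      (Finset.prod_ne_zero_iff.mpr fun k _ => Finset.prod_ne_zero_iff.mpr fun l hl => ?_)
    rw [abs_ne_zero, sub_ne_zero]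
    have : l < k := Finset.mem_Iio.mp hl
    intro h
    have hkl : (k : ℕ) = l := Nat.cast_injective (R := ℝ) h
    exact this.ne' (Fin.ext hkl)

/-- Gauss case of Theorem 6.1: the gap probabilities of the `n × n` GOE
and the `m × m` LUE with parameter `μ - 1/2` satisfy
`(A_{2k+μ-1} + A_{2k+μ})/Z₁ = B_k/Z₂`; moreover all the integrals involved are finite and
`Z₁, Z₂ > 0`. -/
theorem gauss_gap_probability (μ m n : ℕ) (hμ : μ = 0 ∨ μ = 1) (hm : 1 ≤ m)
    (hn : n = 2 * m + μ) (k : ℕ) (s : ℝ) (hs : 0 < s) :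
    (∀ j : ℤ, Integrable (goeGapIntegrand n s j)) ∧
    Integrable (goeTotalIntegrand n) ∧
    IntegrableOn (lueGapIntegrand m μ (s ^ 2) k) {y : Fin m → ℝ | ∀ i, 0 < y i} ∧
    IntegrableOn (lueTotalIntegrand m μ) {y : Fin m → ℝ | ∀ i, 0 < y i} ∧
    (0 < ∫ x, goeTotalIntegrand n x) ∧
    (0 < ∫ y in {y : Fin m → ℝ | ∀ i, 0 < y i}, lueTotalIntegrand m μ y) ∧
    ((∫ x, goeGapIntegrand n s (2 * (k : ℤ) + (μ : ℤ) - 1) x) +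
        ∫ x, goeGapIntegrand n s (2 * (k : ℤ) + (μ : ℤ)) x) /
      (∫ x, goeTotalIntegrand n x) =
    (∫ y in {y : Fin m → ℝ | ∀ i, 0 < y i}, lueGapIntegrand m μ (s ^ 2) k y) /
      (∫ y in {y : Fin m → ℝ | ∀ i, 0 < y i}, lueTotalIntegrand m μ y) := by
  have hgoe : ∀ j : ℤ, Integrable (goeGapIntegrand n s j) := by
    intro j
    have h := bdd_mul_integrable volume
      (fun x : Fin n → ℝ => if ((cntLt s (fun i => |x i|) : ℕ) : ℤ) = j then (1 : ℝ) else 0)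
      (goeTotalIntegrand n) (by
        have h1 : Measurable (fun x : Fin n → ℝ => cntLt s (fun i => |x i|)) :=
          (measurable_cntLt s).comp (measurable_pi_lambda _ fun i => (measurable_pi_apply i).abs)
        exact (measurable_from_nat (f := fun c : ℕ => if (c : ℤ) = j then (1 : ℝ) else 0)).comp h1)
      (fun x => by split_ifs <;> simp) (integrable_goeTotal n)
    refine h.congr (Filter.Eventually.of_forall fun x => ?_)
    simp only [goeGapIntegrand, goeTotalIntegrand, cntLt, ite_mul, one_mul, zero_mul]
  let g : ℕ → ℝ := fun c => if c = k then 1 else 0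
  have hg : ∀ c, |g c| ≤ 1 := by intro c; simp only [g]; split_ifs <;> simp
  have hlueEq : lueGapIntegrand m μ (s ^ 2) k =
      fun y => g (cntLt (s ^ 2) y) * lueTotalIntegrand m μ y := by
    ext y
    simp only [g, lueGapIntegrand, lueTotalIntegrand, cntLt, ite_mul, one_mul, zero_mul]
  have hlueInt : IntegrableOn (lueGapIntegrand m μ (s ^ 2) k) {y : Fin m → ℝ | ∀ i, 0 < y i} := by
    rw [hlueEq]
    exact bdd_mul_integrable _ _ _ ((measurable_from_nat (f := g)).comp (measurable_cntLt _))
      (fun x => hg _) (integrableOn_lueTotal m μ)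
  have hZ1 := goeTotal_integral_pos n
  obtain ⟨C, hC⟩ := goe_reduce μ m n hμ hm hn
  have h1 := hC s g hg
  have h2 := hC s (fun _ => 1) (by simp)
  have h3 := lue_reduce μ m s hs g hg
  have h4 := lue_reduce μ m s hs (fun _ => 1) (by simp)
  simp only [one_mul] at h2 h4
  have hK : (0 : ℝ) < (m.factorial : ℝ) * 2 ^ m := by positivity
  have hred : 0 ≤ ∫ a in chamber m, redDens μ m a :=
    integral_nonneg fun a => sq_nonneg _
  have hredne : (∫ a in chamber m, redDens μ m a) ≠ 0 := by
    intro h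
    rw [h2, h, mul_zero] at hZ1
    exact lt_irrefl _ hZ1
  have hCne : C ≠ 0 := by
    intro h
    rw [h2, h, zero_mul] at hZ1
    exact lt_irrefl _ hZ1
  have hZ2 : 0 < ∫ y in {y : Fin m → ℝ | ∀ i, 0 < y i}, lueTotalIntegrand m μ y := by
    rw [h4]
    exact mul_pos hK (lt_of_le_of_ne hred hredne.symm)
  refine ⟨hgoe, integrable_goeTotal n, hlueInt, integrableOn_lueTotal m μ, hZ1, hZ2, ?_⟩
  have hsum : (∫ x, goeGapIntegrand n s (2 * (k : ℤ) + (μ : ℤ) - 1) x) +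
        ∫ x, goeGapIntegrand n s (2 * (k : ℤ) + (μ : ℤ)) x =
      ∫ x, g ((cntLt s (fun i => |x i|) + 1 - μ) / 2) * goeTotalIntegrand n x := by
    rw [← integral_add (hgoe _) (hgoe _)]
    congr 1
    ext x
    simp only [goeGapIntegrand, g]
    change (if ((cntLt s (fun i => |x i|) : ℕ) : ℤ) = _ then goeTotalIntegrand n x else 0) +
      (if ((cntLt s (fun i => |x i|) : ℕ) : ℤ) = _ then goeTotalIntegrand n x else 0) = _
    generalize cntLt s (fun i => |x i|) = c
    by_cases ha : (c : ℤ) = 2 * (k : ℤ) + (μ : ℤ) - 1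
    · rw [if_pos ha, if_neg (by omega), if_pos (by omega)]; ring
    · by_cases hb : (c : ℤ) = 2 * (k : ℤ) + (μ : ℤ)
      · rw [if_neg ha, if_pos hb, if_pos (by omega)]; ring
      · rw [if_neg ha, if_neg hb, if_neg (by omega)]; ring
  rw [hsum, h1, h2, hlueEq, h3, h4, mul_div_mul_left _ _ hCne, mul_div_mul_left _ _ hK.ne']
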